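/- arXiv:2605.28436 — 2 statements merged into one kernel-verified Lean document; each statement's English description precedes it below -/
import Mathlib

section
/- For every i = 1,…,m the pair (tᵢ, sᵢ) belongs to 𝒮′, and 𝒮′ ⊆ 𝒮 (that is, every (t,s) ∈ 𝒮′ satisfies ‖s − x‖² = (t − b)² for all (b,x) ∈ 𝔛). -/
open scoped RealInnerProductSpace

/-!
For a fixed solution `(b, x)`, the difference of the two sides of `‖y - x‖² = (t - b)²` is
`‖y‖² - t²` plus an affine function of `(t, y)`. Substituting `t = ⟪u, y⟫ - α`, the function `h̃`
vanishes exactly where `‖y‖² - t²` equals the affine function `2⟪y, v⟫ - β` of `y`. So on the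
quadric `h̃ = 0` the equation is affine in `y`, and it extends from the satellites to the part of
the quadric lying in their affine span.
-/

section

variable {E ι : Type*} [NormedAddCommGroup E]

/-- The solution set `𝔛` of the squared global positioning equations, for satellites at positions
`s i` with pseudoranges `t i`. A solution `(b, x)` lists the clock offset before the position. -/
def gpsSolutionSet (s : ι → E) (t : ι → ℝ) : Set (ℝ × E) :=
  {p | ∀ i, ‖s i - p.2‖ ^ 2 = (t i - p.1) ^ 2}

/-- The set `𝒮` of the satellites `(t, y)`, pseudorange first, whose squared positioning equation
is satisfied by every solution in `X`. -/
def compatibleSatellites (X : Set (ℝ × E)) : Set (ℝ × E) :=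
  {q | ∀ p ∈ X, ‖q.2 - p.2‖ ^ 2 = (q.1 - p.1) ^ 2}

variable [InnerProductSpace ℝ E]

/-- The inhomogeneous quadratic function `h̃`, whose zero set contains the satellite positions. -/
def satelliteQuadratic (u v : E) (α β : ℝ) (y : E) : ℝ :=
  ‖y‖ ^ 2 - ⟪u, y⟫ ^ 2 + 2 * ⟪α • u - v, y⟫ + β - α ^ 2

/-- The set `𝒮'`: the part of the quadric `h̃ = 0` in the affine span of `A`, lifted to space-time
by the pseudorange function `y ↦ ⟪u, y⟫ - α`. -/
def satelliteQuadric (A : Set E) (u v : E) (α β : ℝ) : Set (ℝ × E) :=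
  {q | q.2 ∈ affineSpan ℝ A ∧ q.1 = ⟪u, q.2⟫ - α ∧ satelliteQuadratic u v α β q.2 = 0}

theorem inner_eq_of_mem_affineSpan {A : Set E} {w y : E} {c : ℝ} (hA : ∀ a ∈ A, ⟪w, a⟫ = c)
    (hy : y ∈ affineSpan ℝ A) : ⟪w, y⟫ = c :=
  AffineMap.eqOn_affineSpan (f := (innerₛₗ ℝ w).toAffineMap) (g := AffineMap.const ℝ E c) hA hy

theorem satelliteQuadratic_eq (u v : E) (α β : ℝ) (y : E) :
    satelliteQuadratic u v α β y = ‖y‖ ^ 2 - (⟪u, y⟫ - α) ^ 2 - (2 * ⟪y, v⟫ - β) := by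
  rw [satelliteQuadratic, inner_sub_left, real_inner_smul_left, real_inner_comm y v]
  ring

theorem satelliteQuadratic_eq_zero_iff {u v : E} {α β : ℝ} {y : E} :
    satelliteQuadratic u v α β y = 0 ↔ 2 * ⟪y, v⟫ - β = ‖y‖ ^ 2 - (⟪u, y⟫ - α) ^ 2 := by
  rw [satelliteQuadratic_eq, sub_eq_zero, eq_comm]

theorem norm_sub_sq_eq_sq_iff_inner_eq {u v y : E} {α β : ℝ}
    (hy : satelliteQuadratic u v α β y = 0) (b : ℝ) (x : E) :
    ‖y - x‖ ^ 2 = (⟪u, y⟫ - α - b) ^ 2 ↔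
      ⟪x - v - b • u, y⟫ = (‖x‖ ^ 2 - β - 2 * α * b - b ^ 2) / 2 := by
  rw [satelliteQuadratic_eq_zero_iff] at hy
  rw [norm_sub_sq_real, inner_sub_left, inner_sub_left, real_inner_smul_left,
    real_inner_comm y x, real_inner_comm y v]
  constructor <;> intro h <;> linarith

theorem norm_sub_sq_eq_sq_of_mem_affineSpan {A : Set E} {u v x y : E} {α β b : ℝ}
    (hA : ∀ a ∈ A, satelliteQuadratic u v α β a = 0)
    (hx : ∀ a ∈ A, ‖a - x‖ ^ 2 = (⟪u, a⟫ - α - b) ^ 2)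
    (hy : y ∈ affineSpan ℝ A) (hy₀ : satelliteQuadratic u v α β y = 0) :
    ‖y - x‖ ^ 2 = (⟪u, y⟫ - α - b) ^ 2 :=
  (norm_sub_sq_eq_sq_iff_inner_eq hy₀ b x).2 <| inner_eq_of_mem_affineSpan
    (fun a ha ↦ (norm_sub_sq_eq_sq_iff_inner_eq (hA a ha) b x).1 (hx a ha)) hy

theorem stmt_3_general (s : ι → E) (t : ι → ℝ) (u v : E) (α β : ℝ)
    (hα : ∀ i, ⟪u, s i⟫ - α = t i) (hβ : ∀ i, 2 * ⟪s i, v⟫ - β = ‖s i‖ ^ 2 - t i ^ 2) :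
    (∀ i, (t i, s i) ∈ satelliteQuadric (Set.range s) u v α β) ∧
      satelliteQuadric (Set.range s) u v α β ⊆ compatibleSatellites (gpsSolutionSet s t) := by
  have hs : ∀ i, satelliteQuadratic u v α β (s i) = 0 := fun i ↦ by
    rw [satelliteQuadratic_eq_zero_iff, hα, hβ]
  refine ⟨fun i ↦ ⟨mem_affineSpan ℝ (Set.mem_range_self i), (hα i).symm, hs i⟩, ?_⟩
  rintro ⟨τ, y⟩ ⟨hy, hτ, hy₀⟩ ⟨b, x⟩ hx
  have hx' : ∀ i, ‖s i - x‖ ^ 2 = (⟪u, s i⟫ - α - b) ^ 2 := fun i ↦ (hα i).symm ▸ hx i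
  obtain rfl : τ = ⟪u, y⟫ - α := hτ
  exact norm_sub_sq_eq_sq_of_mem_affineSpan (Set.forall_mem_range.2 hs)
    (Set.forall_mem_range.2 hx') hy hy₀

end

theorem stmt_3 {n m : ℕ} [NeZero m] (hn : 1 ≤ n) (hm : m ≤ n + 1)
    (s : Fin m → EuclideanSpace ℝ (Fin n)) (t : Fin m → ℝ)
    (hindep : AffineIndependent ℝ s)
    (u v : EuclideanSpace ℝ (Fin n)) (α β : ℝ)
    (hu : u ∈ Submodule.span ℝ (Set.range fun i => s i - s 0))
    (hα : ∀ i, ⟪u, s i⟫ - α = t i)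
    (hv : v ∈ affineSpan ℝ (Set.range s))
    (hβ : ∀ i, 2 * ⟪s i, v⟫ - β = ‖s i‖ ^ 2 - t i ^ 2)
    (X : Set (ℝ × EuclideanSpace ℝ (Fin n)))
    (hX : X = {p : ℝ × EuclideanSpace ℝ (Fin n) | ∀ i, ‖s i - p.2‖ ^ 2 = (t i - p.1) ^ 2})
    (S : Set (ℝ × EuclideanSpace ℝ (Fin n)))
    (hS : S = {q : ℝ × EuclideanSpace ℝ (Fin n) | ∀ p ∈ X, ‖q.2 - p.2‖ ^ 2 = (q.1 - p.1) ^ 2})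
    (S' : Set (ℝ × EuclideanSpace ℝ (Fin n)))
    (hS' : S' = {q : ℝ × EuclideanSpace ℝ (Fin n) | q.2 ∈ affineSpan ℝ (Set.range s) ∧
        q.1 = ⟪u, q.2⟫ - α ∧ ‖q.2‖ ^ 2 - ⟪u, q.2⟫ ^ 2 + 2 * ⟪α • u - v, q.2⟫ + β - α ^ 2 = 0}) :
    (∀ i, (t i, s i) ∈ S') ∧ S' ⊆ S := by
  subst hX hS hS'
  exact stmt_3_general s t u v α β hα hβ
end

section
/- Assume t₁,…,t_m are not all equal, 𝔛 has at least two elements, and e = ‖u‖ ∉ {0,1}. Then Q_sat = {v + z₀·u + Σ_{i=1}^{m−2} zᵢ·w′ᵢ : z₀,…,z_{m−2} ∈ ℝ with Σ_{i=1}^{m−2} zᵢ² − e²(e² − 1)(z₀ + μ)² + ρ = 0}. -/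
open scoped RealInnerProductSpace

/-!
Read `(b, x)` and `(tᵢ, sᵢ)` as events of Minkowski space-time `ℝ × E`. A solution is an event at
null separation from all satellite events, and `𝒮` consists of the events at null separation from
all solutions. The satellite events lie on a quadric with centre `c = (-μ, v - μ u)`: they are of
the form `c + a` with `a ∈ V := {(⟪u, x⟫, x) | x ∈ U}` of Minkowski square `-ρ`. Expanding
`(a - w)² = a² - 2 a·w + w²` shows that the solutions are the `c + w` with `w ∈ V^⊥` and `w² = ρ`.
For `‖u‖ ≠ 1` the form is nondegenerate on `V^⊥`, so this level set spans `V^⊥` as soon as it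
contains a nonzero vector, and the same expansion identifies `𝒮` with the `c + a` such that
`a ∈ V^⊥^⊥ = V` and `a² = -ρ`.
-/

theorem exists_ne_zero_add_mul_ne_zero {K : Type*} [Field K] [Infinite K] {a b : K} (ha : a ≠ 0)
    (hb : b ≠ 0) (d : K) : ∃ r ≠ 0, a + r * d ≠ 0 ∧ b + r * d ≠ 0 := by
  classical
  obtain ⟨r, hr⟩ := Infinite.exists_notMem_finset ({0, -a / d, -b / d} : Finset K)
  simp only [Finset.mem_insert, Finset.mem_singleton, not_or] at hr
  have add_mul_ne_zero {c : K} (hc : c ≠ 0) (hrc : r ≠ -c / d) : c + r * d ≠ 0 := by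
    intro h
    have hd : d ≠ 0 := fun hd ↦ hc (by rwa [hd, mul_zero, add_zero] at h)
    exact hrc ((eq_div_iff hd).mpr (eq_neg_of_add_eq_zero_right h))
  exact ⟨r, hr.1, add_mul_ne_zero ha hr.2.1, add_mul_ne_zero hb hr.2.2⟩

theorem sq_sub_one_ne_zero_of_nonneg {r : ℝ} (hr : 0 ≤ r) (hr1 : r ≠ 1) : r ^ 2 - 1 ≠ 0 := by
  rwa [sub_ne_zero, ne_eq, pow_eq_one_iff_of_nonneg hr two_ne_zero]

theorem mem_span_insert_range_iff {R M κ : Type*} [Ring R] [AddCommGroup M] [Module R M] [Fintype κ]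
    {u a : M} {w : κ → M} :
    a ∈ Submodule.span R (insert u (Set.range w)) ↔
      ∃ (z₀ : R) (z : κ → R), a = z₀ • u + ∑ i, z i • w i := by
  simp only [Submodule.mem_span_insert, Submodule.mem_span_range_iff_exists_fun]
  exact ⟨fun ⟨z₀, _, ⟨z, hz⟩, ha⟩ ↦ ⟨z₀, z, hz ▸ ha⟩, fun ⟨z₀, z, ha⟩ ↦ ⟨z₀, _, ⟨z, rfl⟩, ha⟩⟩

section BilinForm

open LinearMap (BilinForm)

section CommRing

variable {R F : Type*} [CommRing R] [AddCommGroup F] [Module R F] {B : BilinForm R F}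

theorem apply_sub_self_of_isSymm (hB : B.IsSymm) (x y : F) :
    B (x - y) (x - y) = B x x - 2 * B x y + B y y := by
  simp only [map_sub, LinearMap.sub_apply, hB.eq y x]
  ring

theorem mem_orthogonal_vectorSpan_iff {A : Set F} {q₀ : F} (hq₀ : q₀ ∈ A) {x : F} :
    x ∈ B.orthogonal (vectorSpan R A) ↔ ∀ q ∈ A, B q x = B q₀ x := by
  have : x ∈ B.orthogonal (vectorSpan R A) ↔ vectorSpan R A ≤ LinearMap.ker (B.flip x) := Iff.rfl
  rw [this, vectorSpan_eq_span_vsub_set_right R hq₀, Submodule.span_le, Set.image_subset_iff]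
  exact forall₂_congr fun q _ ↦ by
    rw [Set.mem_preimage, SetLike.mem_coe, LinearMap.mem_ker, LinearMap.BilinForm.flip_apply,
      vsub_eq_sub, map_sub, LinearMap.sub_apply, sub_eq_zero]

/-- The points `q` with `B (q - p) (q - p) = 0` for all `p ∈ A`. For the Minkowski form these are
the events that can exchange a light signal with every event of `A`. -/
def nullPolar (B : BilinForm R F) (A : Set F) : Set F :=
  {q | ∀ p ∈ A, B (q - p) (q - p) = 0}

/-- The part of the affine subspace `c + W` on which `B (p - c) (p - c)` is equal to `ρ`. -/
def quadricIn (B : BilinForm R F) (W : Submodule R F) (c : F) (ρ : R) : Set F :=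
  {p | p - c ∈ W ∧ B (p - c) (p - c) = ρ}

theorem nullPolar_eq_quadricIn_orthogonal [IsDomain R] [NeZero (2 : R)] (hB : B.IsSymm)
    {A : Set F} {c : F} {ρ : R} (hc : c ∈ affineSpan R A)
    (hA : ∀ q ∈ A, B (q - c) (q - c) = -ρ) :
    nullPolar B A = quadricIn B (B.orthogonal (vectorSpan R A)) c ρ := by
  ext p
  have hnull {q : F} (hq : q ∈ A) :
      B (p - q) (p - q) = B (p - c) (p - c) - 2 * B (q - c) (p - c) - ρ := by
    rw [← sub_sub_sub_cancel_right p q c, apply_sub_self_of_isSymm hB, hA q hq,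
      hB.eq (p - c) (q - c)]
    ring
  have hspan {q : F} (hq : q ∈ A) : q - c ∈ vectorSpan R A := by
    rw [← direction_affineSpan]
    exact AffineSubspace.vsub_mem_direction (mem_affineSpan R hq) hc
  constructor
  · intro hp
    obtain ⟨q₀, hq₀⟩ := (affineSpan_nonempty R).mp ⟨c, hc⟩
    have hp_eq {q : F} (hq : q ∈ A) := (hnull hq).symm.trans (hp q hq)
    have horth : p - c ∈ B.orthogonal (vectorSpan R A) := by
      refine (mem_orthogonal_vectorSpan_iff hq₀).mpr fun q hq ↦ ?_
      have : B (q - c) (p - c) = B (q₀ - c) (p - c) :=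
        mul_left_cancel₀ (two_ne_zero (α := R)) (by linear_combination hp_eq hq₀ - hp_eq hq)
      simpa only [map_sub B, LinearMap.sub_apply, sub_left_inj] using this
    have hp_q₀ := hp_eq hq₀
    rw [horth _ (hspan hq₀)] at hp_q₀
    exact ⟨horth, by linear_combination hp_q₀⟩
  · rintro ⟨horth, hρ⟩ q hq
    rw [hnull hq, horth _ (hspan hq), hρ]
    ring

end CommRing

section Field

variable {K F : Type*} [Field K] [AddCommGroup F] [Module K F] {B : BilinForm K F}

theorem apply_reflection_self_of_isSymm (hB : B.IsSymm) {w : F} (hw : B w w ≠ 0) (p : F) :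
    B (p - (2 * B p w / B w w) • w) (p - (2 * B p w / B w w) • w) = B p p := by
  rw [apply_sub_self_of_isSymm hB]
  simp only [map_smul, LinearMap.smul_apply, smul_eq_mul]
  field_simp
  ring

variable [Infinite K] [NeZero (2 : K)]

-- Reflecting `p` along an anisotropic `w` stays on the level set, so the span contains `w` unless
-- `B p w = 0`. A functional `f` vanishing on the span is thus confronted with `w` and `w + r • p`.
theorem span_setOf_apply_self_eq_top (hB : B.IsSymm) (hB' : B.Nondegenerate) {p : F} (hp : p ≠ 0) :
    Submodule.span K {w | B w w = B p p} = ⊤ := by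
  by_contra hspan
  obtain ⟨f, hf, hker⟩ := Submodule.exists_le_ker_of_lt_top _ (lt_top_iff_ne_top.mpr hspan)
  have hf_level {w : F} (hw : B w w = B p p) : f w = 0 := hker (Submodule.subset_span hw)
  have hisotropic {w : F} (hpw : B p w ≠ 0) (hfw : f w ≠ 0) : B w w = 0 := by
    by_contra hw
    have h := hf_level (apply_reflection_self_of_isSymm hB hw p)
    rw [map_sub, map_smul, hf_level rfl, zero_sub, neg_eq_zero, smul_eq_mul] at h
    exact mul_ne_zero (div_ne_zero (mul_ne_zero two_ne_zero hpw) hw) hfw h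
  have hBp : B p ≠ 0 := fun h ↦ hp (hB'.1 p fun y ↦ by rw [h, LinearMap.zero_apply])
  obtain ⟨w, -, hw⟩ := Module.Dual.exists_forall_mem_ne_zero_of_forall_exists ⊤ ![B p, f] (by
    simpa [Fin.forall_fin_two, LinearMap.ext_iff] using And.intro hBp hf)
  obtain ⟨hpw, hfw⟩ : B p w ≠ 0 ∧ f w ≠ 0 := by simpa [Fin.forall_fin_two] using hw
  obtain ⟨r, hr0, hr1, hr2⟩ :=
    exists_ne_zero_add_mul_ne_zero hpw (mul_ne_zero two_ne_zero hpw) (B p p)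
  have hww : B w w = 0 := hisotropic hpw hfw
  have hww' : B (w + r • p) (w + r • p) = 0 :=
    hisotropic (by simpa using hr1) (by simpa [hf_level rfl] using hfw)
  have hmul : r * (2 * B p w + r * B p p) = 0 := by
    simp only [map_add, map_smul, LinearMap.add_apply, LinearMap.smul_apply, smul_eq_mul,
      hB.eq w p, hww] at hww'
    linear_combination hww'
  exact mul_ne_zero hr0 hr2 hmul

theorem nullPolar_quadricIn (hB : B.IsSymm) {W : Submodule K F}
    (hW : (B.restrict W).Nondegenerate) {c : F} {ρ : K} (hX : (quadricIn B W c ρ).Nontrivial) :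
    nullPolar B (quadricIn B W c ρ) = quadricIn B (B.orthogonal W) c (-ρ) := by
  obtain ⟨p, ⟨hpW, hpρ⟩, hpc⟩ := hX.exists_ne c
  have hspan : Submodule.span K {w : W | B w w = ρ} = ⊤ := by
    rw [← hpρ]
    exact span_setOf_apply_self_eq_top (B := B.restrict W) ⟨fun x y ↦ hB.eq x y⟩ hW
      (p := ⟨p - c, hpW⟩) (by simpa [Subtype.ext_iff, sub_eq_zero] using hpc)
  ext q
  constructor
  · intro hq
    have hq_null {w : F} (hw : w ∈ W) (hwρ : B w w = ρ) :
        B (q - c) (q - c) - 2 * B w (q - c) + ρ = 0 := by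
      have := hq (c + w) ⟨by rwa [add_sub_cancel_left], by rwa [add_sub_cancel_left]⟩
      rwa [← sub_sub, apply_sub_self_of_isSymm hB, hwρ, hB.eq _ w] at this
    have horth_level {w : F} (hw : w ∈ W) (hwρ : B w w = ρ) : B w (q - c) = 0 := by
      have h := hq_null hw hwρ
      have h_neg := hq_null (W.neg_mem hw) (by simpa using hwρ)
      rw [map_neg, LinearMap.neg_apply] at h_neg
      have : (2 * 2) * B w (q - c) = 0 := by linear_combination h_neg - h
      simpa [NeZero.ne] using this
    have hker : (⊤ : Submodule K W) ≤ LinearMap.ker (B.flip (q - c) ∘ₗ W.subtype) := by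
      rw [← hspan, Submodule.span_le]
      exact fun w hw ↦ horth_level w.2 hw
    refine ⟨fun w hw ↦ hker (Submodule.mem_top (x := ⟨w, hw⟩)), ?_⟩
    have h := hq_null hpW hpρ
    rw [horth_level hpW hpρ] at h
    linear_combination h
  · rintro ⟨horth, hρ⟩ x ⟨hxW, hxρ⟩
    rw [← sub_sub_sub_cancel_right q x c, apply_sub_self_of_isSymm hB, hB.eq (q - c) (x - c),
      horth _ hxW, hρ, hxρ]
    ring

end Field

end BilinForm

section Minkowski

variable {E : Type*} [NormedAddCommGroup E] [InnerProductSpace ℝ E]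

variable (E) in
/-- The Minkowski form `⟪x, y⟫ - a * b` of the vectors `(a, x)` and `(b, y)`, the first
coordinate being time. -/
noncomputable def minkowskiForm : LinearMap.BilinForm ℝ (ℝ × E) :=
  (innerₗ E).compl₁₂ (LinearMap.snd ℝ ℝ E) (LinearMap.snd ℝ ℝ E) -
    (LinearMap.mul ℝ ℝ).compl₁₂ (LinearMap.fst ℝ ℝ E) (LinearMap.fst ℝ ℝ E)

theorem minkowskiForm_apply (p q : ℝ × E) :
    minkowskiForm E p q = ⟪p.2, q.2⟫ - p.1 * q.1 := rfl

theorem minkowskiForm_isSymm : (minkowskiForm E).IsSymm :=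
  ⟨fun p q ↦ by simp only [minkowskiForm_apply, real_inner_comm, mul_comm]⟩

theorem minkowskiForm_self (p : ℝ × E) : minkowskiForm E p p = ‖p.2‖ ^ 2 - p.1 ^ 2 := by
  rw [minkowskiForm_apply, real_inner_self_eq_norm_sq, sq p.1]

/-- The graph over `U` of the linear functional `⟪u, ·⟫`, as a subspace of space-time. -/
noncomputable def innerGraph (u : E) (U : Submodule ℝ E) : Submodule ℝ (ℝ × E) :=
  U.map ((innerₗ E u).prod LinearMap.id)

variable {u : E} {U : Submodule ℝ E}

theorem mem_innerGraph {p : ℝ × E} : p ∈ innerGraph u U ↔ p.2 ∈ U ∧ p.1 = ⟪u, p.2⟫ := by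
  constructor
  · rintro ⟨a, ha, rfl⟩
    exact ⟨ha, rfl⟩
  · rintro ⟨hp, hp'⟩
    exact ⟨p.2, hp, Prod.ext hp'.symm rfl⟩

theorem mem_orthogonal_innerGraph {p : ℝ × E} :
    p ∈ (minkowskiForm E).orthogonal (innerGraph u U) ↔ p.2 - p.1 • u ∈ Uᗮ := by
  have hgraph (a : E) :
      minkowskiForm E ((innerₗ E u).prod LinearMap.id a) p = ⟪a, p.2 - p.1 • u⟫ := by
    rw [inner_sub_right, real_inner_smul_right, real_inner_comm u a, mul_comm]
    rfl
  constructor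
  · exact fun hp a ha ↦ by rw [← hgraph]; exact hp _ ⟨a, ha, rfl⟩
  · rintro hp _ ⟨a, ha, rfl⟩
    exact (hgraph a).trans (hp a ha)

theorem orthogonal_orthogonal_innerGraph [U.HasOrthogonalProjection] :
    (minkowskiForm E).orthogonal ((minkowskiForm E).orthogonal (innerGraph u U)) =
      innerGraph u U := by
  refine le_antisymm (fun p hp ↦ ?_)
    (LinearMap.BilinForm.le_orthogonal_orthogonal minkowskiForm_isSymm.isRefl)
  have hp_inner (q : ℝ × E) (hq : q.2 - q.1 • u ∈ Uᗮ) : ⟪q.2, p.2⟫ = q.1 * p.1 :=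
    sub_eq_zero.mp (hp q (mem_orthogonal_innerGraph.mpr hq))
  rw [mem_innerGraph, ← U.orthogonal_orthogonal]
  exact ⟨fun y hy ↦ by simpa using hp_inner (0, y) (by simpa using hy),
    by simpa using (hp_inner (1, u) (by simp)).symm⟩

theorem nondegenerate_restrict_orthogonal_innerGraph [U.HasOrthogonalProjection] (hu : u ∈ U)
    (he : ‖u‖ ≠ 1) :
    ((minkowskiForm E).restrict
      ((minkowskiForm E).orthogonal (innerGraph u U))).Nondegenerate := by
  apply LinearMap.BilinForm.nondegenerate_restrict_of_disjoint_orthogonal _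
    minkowskiForm_isSymm.isRefl
  rw [orthogonal_orthogonal_innerGraph, Submodule.disjoint_def]
  intro p hp_orth hp
  rw [mem_orthogonal_innerGraph] at hp_orth
  obtain ⟨hpU, hp_time⟩ := mem_innerGraph.mp hp
  have hp_space : p.2 = p.1 • u := sub_eq_zero.mp <|
    U.disjoint_def.mp U.orthogonal_disjoint _ (U.sub_mem hpU (U.smul_mem _ hu)) hp_orth
  have hp1 : p.1 * (‖u‖ ^ 2 - 1) = 0 := by
    rw [hp_space, real_inner_smul_right, real_inner_self_eq_norm_sq] at hp_time
    linear_combination -hp_time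
  have : p.1 = 0 :=
    (mul_eq_zero.mp hp1).resolve_right (sq_sub_one_ne_zero_of_nonneg (norm_nonneg u) he)
  exact Prod.ext this (by rw [hp_space, this, zero_smul]; rfl)

/-- The solutions `(b, x)` of the squared global positioning equations. -/
def gpsSolutions {ι : Type*} (s : ι → E) (t : ι → ℝ) : Set (ℝ × E) :=
  {p | ∀ i, ‖s i - p.2‖ ^ 2 = (t i - p.1) ^ 2}

/-- The set `𝒮` of all satellite events `(t, s)` whose positioning equation holds on all of `X`. -/
def gpsSaturation (X : Set (ℝ × E)) : Set (ℝ × E) :=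
  {q | ∀ p ∈ X, ‖q.2 - p.2‖ ^ 2 = (q.1 - p.1) ^ 2}

theorem gpsSaturation_eq_nullPolar (X : Set (ℝ × E)) :
    gpsSaturation X = nullPolar (minkowskiForm E) X := by
  simp only [gpsSaturation, nullPolar, minkowskiForm_self, sub_eq_zero, Prod.fst_sub, Prod.snd_sub]

variable {ι : Type*} {s : ι → E} {t : ι → ℝ}

theorem gpsSolutions_eq_nullPolar :
    gpsSolutions s t = nullPolar (minkowskiForm E) (Set.range fun i ↦ (t i, s i)) := by
  simp only [gpsSolutions, nullPolar, minkowskiForm_self, sub_eq_zero, Prod.fst_sub, Prod.snd_sub,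
    Set.forall_mem_range, norm_sub_rev, sub_sq_comm]

variable {v : E} {α β μ ρ : ℝ}

/-- The affine hyperplane `{(t, x) | t = ⟪u, x⟫ - α}` of space-time, parametrized by space. -/
noncomputable def innerAffineGraph (u : E) (α : ℝ) : E →ᵃ[ℝ] ℝ × E :=
  ((innerₗ E u).prod LinearMap.id).toAffineMap + AffineMap.const ℝ E (-α, 0)

theorem innerAffineGraph_apply (x : E) : innerAffineGraph u α x = (⟪u, x⟫ - α, x) := by
  simp [innerAffineGraph, sub_eq_add_neg]

theorem range_eq_image_innerAffineGraph (hα : ∀ i, ⟪u, s i⟫ - α = t i) :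
    (Set.range fun i ↦ (t i, s i)) = innerAffineGraph u α '' Set.range s := by
  simp only [← Set.range_comp, Function.comp_def, innerAffineGraph_apply, hα]

theorem vectorSpan_range_eq_innerGraph (hα : ∀ i, ⟪u, s i⟫ - α = t i) :
    vectorSpan ℝ (Set.range fun i ↦ (t i, s i)) = innerGraph u (vectorSpan ℝ (Set.range s)) := by
  rw [range_eq_image_innerAffineGraph hα, ← AffineMap.map_vectorSpan]
  simp [innerAffineGraph, innerGraph]

theorem mem_affineSpan_range_of_time_eq (hα : ∀ i, ⟪u, s i⟫ - α = t i) {p : ℝ × E}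
    (hp : p.2 ∈ affineSpan ℝ (Set.range s)) (hp_time : p.1 = ⟪u, p.2⟫ - α) :
    p ∈ affineSpan ℝ (Set.range fun i ↦ (t i, s i)) := by
  rw [range_eq_image_innerAffineGraph hα, ← AffineSubspace.map_span]
  exact ⟨p.2, hp, by rw [innerAffineGraph_apply, ← hp_time]⟩

theorem minkowskiForm_sub_center_self (hμ : ⟪u, v⟫ - α = (‖u‖ ^ 2 - 1) * μ)
    {y : E} {τ : ℝ} (hα : ⟪u, y⟫ - α = τ) (hβ : 2 * ⟪y, v⟫ - β = ‖y‖ ^ 2 - τ ^ 2) :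
    minkowskiForm E ((τ, y) - (-μ, v - μ • u)) ((τ, y) - (-μ, v - μ • u)) =
      -((‖u‖ ^ 2 - 1) * μ ^ 2 - ‖v‖ ^ 2 + β) := by
  have : y - (v - μ • u) = (y - v) + μ • u := by abel
  rw [minkowskiForm_self, Prod.fst_sub, Prod.snd_sub, this, norm_add_sq_real, norm_sub_sq_real,
    real_inner_smul_right, inner_sub_left, real_inner_comm u y, real_inner_comm u v, norm_smul,
    mul_pow, Real.norm_eq_abs, sq_abs]
  linear_combination -hβ + 2 * μ * hα - 2 * μ * hμ

theorem gpsSaturation_gpsSolutions {c : ℝ × E}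
    [(vectorSpan ℝ (Set.range s)).HasOrthogonalProjection]
    (hu : u ∈ vectorSpan ℝ (Set.range s)) (he : ‖u‖ ≠ 1) (hα : ∀ i, ⟪u, s i⟫ - α = t i)
    (hc : c.2 ∈ affineSpan ℝ (Set.range s)) (hc_time : c.1 = ⟪u, c.2⟫ - α)
    (hρ : ∀ i, minkowskiForm E ((t i, s i) - c) ((t i, s i) - c) = -ρ)
    (hX : (gpsSolutions s t).Nontrivial) :
    gpsSaturation (gpsSolutions s t) =
      quadricIn (minkowskiForm E) (innerGraph u (vectorSpan ℝ (Set.range s))) c (-ρ) := by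
  have hsol : gpsSolutions s t = quadricIn (minkowskiForm E)
      ((minkowskiForm E).orthogonal (innerGraph u (vectorSpan ℝ (Set.range s)))) c ρ := by
    rw [gpsSolutions_eq_nullPolar, ← vectorSpan_range_eq_innerGraph hα]
    exact nullPolar_eq_quadricIn_orthogonal minkowskiForm_isSymm
      (mem_affineSpan_range_of_time_eq hα hc hc_time) (Set.forall_mem_range.mpr hρ)
  rw [hsol] at hX ⊢
  rw [gpsSaturation_eq_nullPolar, nullPolar_quadricIn minkowskiForm_isSymm
    (nondegenerate_restrict_orthogonal_innerGraph hu he) hX, orthogonal_orthogonal_innerGraph]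

theorem exists_mem_quadricIn_innerGraph_iff {c : ℝ × E} {x : E} :
    (∃ τ, (τ, x) ∈ quadricIn (minkowskiForm E) (innerGraph u U) c ρ) ↔
      x - c.2 ∈ U ∧ ‖x - c.2‖ ^ 2 - ⟪u, x - c.2⟫ ^ 2 = ρ := by
  simp only [quadricIn, Set.mem_ofPred_eq, mem_innerGraph, minkowskiForm_self, Prod.fst_sub,
    Prod.snd_sub]
  constructor
  · rintro ⟨τ, ⟨hx, hτ⟩, hρ⟩
    exact ⟨hx, hτ ▸ hρ⟩
  · rintro ⟨hx, hρ⟩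
    exact ⟨c.1 + ⟪u, x - c.2⟫, ⟨hx, by ring⟩, by rwa [add_sub_cancel_left]⟩

theorem exists_mem_gpsSaturation_gpsSolutions_iff
    [(vectorSpan ℝ (Set.range s)).HasOrthogonalProjection]
    (hu : u ∈ vectorSpan ℝ (Set.range s)) (he : ‖u‖ ≠ 1) (hα : ∀ i, ⟪u, s i⟫ - α = t i)
    (hv : v ∈ affineSpan ℝ (Set.range s))
    (hβ : ∀ i, 2 * ⟪s i, v⟫ - β = ‖s i‖ ^ 2 - t i ^ 2)
    (hμ : ⟪u, v⟫ - α = (‖u‖ ^ 2 - 1) * μ) (hρ : ρ = (‖u‖ ^ 2 - 1) * μ ^ 2 - ‖v‖ ^ 2 + β)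
    (hX : (gpsSolutions s t).Nontrivial) {x : E} :
    (∃ τ, (τ, x) ∈ gpsSaturation (gpsSolutions s t)) ↔
      x - (v - μ • u) ∈ vectorSpan ℝ (Set.range s) ∧
        ‖x - (v - μ • u)‖ ^ 2 - ⟪u, x - (v - μ • u)⟫ ^ 2 = -ρ := by
  have hc : v - μ • u ∈ affineSpan ℝ (Set.range s) := by
    rw [sub_eq_neg_add]
    refine AffineSubspace.vadd_mem_of_mem_direction ?_ hv
    rw [direction_affineSpan]
    exact neg_mem (Submodule.smul_mem _ μ hu)
  have hc_time : -μ = ⟪u, v - μ • u⟫ - α := by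
    rw [inner_sub_right, real_inner_smul_right, real_inner_self_eq_norm_sq]
    linear_combination -hμ
  have hcs (i : ι) := minkowskiForm_sub_center_self hμ (hα i) (hβ i)
  rw [← hρ] at hcs
  rw [gpsSaturation_gpsSolutions hu he hα hc hc_time hcs hX, exists_mem_quadricIn_innerGraph_iff]

variable {κ : Type*} [Fintype κ] {w : κ → E}

theorem norm_sq_sub_inner_sq_smul_add_sum (hw : Orthonormal ℝ w) (huw : ∀ i, ⟪u, w i⟫ = 0)
    (z₀ : ℝ) (z : κ → ℝ) :
    ‖z₀ • u + ∑ i, z i • w i‖ ^ 2 - ⟪u, z₀ • u + ∑ i, z i • w i⟫ ^ 2 =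
      ∑ i, z i ^ 2 - ‖u‖ ^ 2 * (‖u‖ ^ 2 - 1) * z₀ ^ 2 := by
  have hu_sum : ⟪u, ∑ i, z i • w i⟫ = 0 := by
    simp only [inner_sum, real_inner_smul_right, huw, mul_zero, Finset.sum_const_zero]
  have hnorm_sum : ‖∑ i, z i • w i‖ ^ 2 = ∑ i, z i ^ 2 := by
    rw [← real_inner_self_eq_norm_sq, hw.inner_sum]
    simp only [conj_trivial, sq]
  rw [norm_add_sq_real, inner_add_right, real_inner_smul_left, real_inner_smul_right, hu_sum,
    hnorm_sum, norm_smul, mul_pow, Real.norm_eq_abs, sq_abs, real_inner_self_eq_norm_sq]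
  ring

end Minkowski

theorem stmt_7_general {E ι κ : Type*} [NormedAddCommGroup E] [InnerProductSpace ℝ E] [Fintype κ]
    {s : ι → E} {t : ι → ℝ} {u v : E} {α β μ ρ : ℝ} {w : κ → E}
    (hu : u ∈ vectorSpan ℝ (Set.range s)) (hα : ∀ i, ⟪u, s i⟫ - α = t i)
    (hv : v ∈ affineSpan ℝ (Set.range s))
    (hβ : ∀ i, 2 * ⟪s i, v⟫ - β = ‖s i‖ ^ 2 - t i ^ 2)
    (hX : (gpsSolutions s t).Nontrivial) (he : ‖u‖ ≠ 1)
    (hμ : μ = (⟪u, v⟫ - α) / (‖u‖ ^ 2 - 1))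
    (hρ : ρ = (⟪u, v⟫ - α) ^ 2 / (‖u‖ ^ 2 - 1) - ‖v‖ ^ 2 + β)
    (hw : Orthonormal ℝ w) (huw : ∀ i, ⟪u, w i⟫ = 0)
    (hspan : Submodule.span ℝ (insert u (Set.range w)) = vectorSpan ℝ (Set.range s)) :
    {x | ∃ τ, (τ, x) ∈ gpsSaturation (gpsSolutions s t)} =
      {x | ∃ (z₀ : ℝ) (z : κ → ℝ), x = v + z₀ • u + ∑ i, z i • w i ∧
        ∑ i, z i ^ 2 - ‖u‖ ^ 2 * (‖u‖ ^ 2 - 1) * (z₀ + μ) ^ 2 + ρ = 0} := by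
  have : FiniteDimensional ℝ (vectorSpan ℝ (Set.range s)) := by
    rw [← hspan]
    exact FiniteDimensional.span_of_finite ℝ ((Set.finite_range w).insert u)
  have he' : ‖u‖ ^ 2 - 1 ≠ 0 := sq_sub_one_ne_zero_of_nonneg (norm_nonneg u) he
  have hμ' : ⟪u, v⟫ - α = (‖u‖ ^ 2 - 1) * μ := by rw [hμ, mul_div_cancel₀ _ he']
  have hρ' : ρ = (‖u‖ ^ 2 - 1) * μ ^ 2 - ‖v‖ ^ 2 + β := by
    rw [hρ, hμ']
    field_simp
  ext x
  rw [Set.mem_ofPred_eq, exists_mem_gpsSaturation_gpsSolutions_iff hu he hα hv hβ hμ' hρ' hX,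
    ← hspan, mem_span_insert_range_iff]
  constructor
  · rintro ⟨⟨z₀, z, hz⟩, hx⟩
    rw [hz, norm_sq_sub_inner_sq_smul_add_sum hw huw] at hx
    refine ⟨z₀ - μ, z, ?_, by rw [sub_add_cancel, hx, neg_add_cancel]⟩
    rw [← sub_add_cancel x (v - μ • u), hz]
    module
  · rintro ⟨z₀, z, rfl, hz⟩
    have hx : v + z₀ • u + ∑ i, z i • w i - (v - μ • u) = (z₀ + μ) • u + ∑ i, z i • w i := by
      module
    rw [hx, norm_sq_sub_inner_sq_smul_add_sum hw huw]
    exact ⟨⟨_, _, rfl⟩, eq_neg_of_add_eq_zero_left hz⟩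

theorem stmt_7 {n m : ℕ} [NeZero m] (hn : 1 ≤ n) (hm : m ≤ n + 1)
    (s : Fin m → EuclideanSpace ℝ (Fin n)) (t : Fin m → ℝ)
    (hindep : AffineIndependent ℝ s)
    (u v : EuclideanSpace ℝ (Fin n)) (α β : ℝ)
    (hu : u ∈ Submodule.span ℝ (Set.range fun i => s i - s 0))
    (hα : ∀ i, ⟪u, s i⟫ - α = t i)
    (hv : v ∈ affineSpan ℝ (Set.range s))
    (hβ : ∀ i, 2 * ⟪s i, v⟫ - β = ‖s i‖ ^ 2 - t i ^ 2)
    (X : Set (ℝ × EuclideanSpace ℝ (Fin n)))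
    (hX : X = {p : ℝ × EuclideanSpace ℝ (Fin n) | ∀ i, ‖s i - p.2‖ ^ 2 = (t i - p.1) ^ 2})
    (S : Set (ℝ × EuclideanSpace ℝ (Fin n)))
    (hS : S = {q : ℝ × EuclideanSpace ℝ (Fin n) | ∀ p ∈ X, ‖q.2 - p.2‖ ^ 2 = (q.1 - p.1) ^ 2})
    (Qsat : Set (EuclideanSpace ℝ (Fin n)))
    (hQsat : Qsat = {x : EuclideanSpace ℝ (Fin n) | ∃ τ : ℝ, (τ, x) ∈ S})
    (htne : ∃ i j : Fin m, t i ≠ t j)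
    (hX2 : X.Nontrivial)
    (hu0 : u ≠ 0)
    (e μ ρ : ℝ) (he : e = ‖u‖) (he0 : e ≠ 0) (he1 : e ≠ 1)
    (hμ : μ = (⟪u, v⟫ - α) / (e ^ 2 - 1))
    (hρ : ρ = (⟪u, v⟫ - α) ^ 2 / (e ^ 2 - 1) - ‖v‖ ^ 2 + β)
    (w' : Fin (m - 2) → EuclideanSpace ℝ (Fin n)) (hw' : Orthonormal ℝ w')
    (hw'u : ∀ i, ⟪u, w' i⟫ = 0)
    (hw'span : Submodule.span ℝ (insert u (Set.range w'))
      = Submodule.span ℝ (Set.range fun i => s i - s 0)) :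
    Qsat = {x : EuclideanSpace ℝ (Fin n) | ∃ (z₀ : ℝ) (z : Fin (m - 2) → ℝ),
      x = v + z₀ • u + ∑ i, z i • w' i ∧
      (∑ i, z i ^ 2) - e ^ 2 * (e ^ 2 - 1) * (z₀ + μ) ^ 2 + ρ = 0} := by
  subst hX hS hQsat he
  have hU := vectorSpan_range_eq_span_range_vsub_right ℝ s 0
  simp only [vsub_eq_sub] at hU
  rw [← hU] at hu hw'span
  exact stmt_7_general hu hα hv hβ hX2 he1 hμ hρ hw' hw'u hw'span
end
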